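/- Let Δ be a translation quiver and x, y vertices such that all paths from x to y are pairwise homotopic and all paths from x to y are closed. Suppose there is a path x = x_0 → x_1 → … → x_n = y in Δ. For each 1 ≤ i ≤ n let α_{i1}, …, α_{id_i} be all the arrows from x_{i−1} to x_i and let a_{ij} ∈ k (1 ≤ j ≤ d_i) be scalars such that for every i at least one a_{ij} is nonzero; set h_i = a_{i1}α_{i1} + … + a_{id_i}α_{id_i} ∈ kΔ(x_{i−1}, x_i). Then the composite h_n ⋯ h_1 ∈ kΔ(x,y) does not lie in the subspace I(x,y) spanned by the mesh-canonical relations between x and y; equivalently, the class of h_n ⋯ h_1 in the mesh category, i.e. in k(Δ)(x,y) = kΔ(x,y)/I(x,y), is nonzero. -/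

import Mathlib

/-!
The idea is that, under the closedness hypothesis, composing with a nonzero combination of
parallel arrows is injective in the mesh category.

Write `I(x,u)` for the span of the mesh-canonical relations. Every path ending at `u` has a
last arrow, so `kΔ(x,u)` is the direct sum, over the arrows `b : v' ⟶ u`, of copies of
`kΔ(x,v')`; let `lastCoeff b` be the projection on the summand of `b`. An element `f` of `I(x,u)`
satisfies `lastCoeff b f ≡ σ(b) t` modulo `I(x,v')` for all `b`, with one and the same
`t ∈ kΔ(x,τu)` (and `t = 0` if `u` is projective): this is `lastCoeff_of_proj` and
`lastCoeff_of_not_proj`.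

Suppose that `h = Σ a_j α_j`, a nonzero combination of the arrows `v ⟶ u`, and `s ∈ kΔ(x,v)`
satisfy `h s ∈ I(x,u)`, and take `t` as above. If `t ≠ 0`, then some path from `x` to `u` runs
through the mesh `τu → v → u`, so by closedness `τu` has a successor `v' ≠ v`. This gives an arrow
`b : v' ⟶ u` with `lastCoeff b (h s) = 0`, whence `σ(b) t ∈ I(x,v')`. Induction on a bound for the
length of the paths applies to `σ(b)` and gives `t ∈ I(x,τu)`. So in all cases
`a_j s = lastCoeff α_j (h s) ∈ I(x,v)`, and `s ∈ I(x,v)` (`mem_of_sum_post_mem`).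

The arrows `h_n, …, h_1` can therefore be stripped off one by one, leaving the trivial path, which
is not in `I(x,x)` because mesh-canonical relations involve only paths of length at least two.
Homotopic paths have equal lengths, which supplies the bound needed for the induction.
-/

/-!
Translation quivers, paths, mesh relations, mesh-canonical relations,
(mesh-)lexicographic orders, walks and homotopy, following
Chaio–Le Meur–Trepode and Riedtmann/Bongartz–Gabriel.
-/

/-- A (locally finite) translation quiver: a quiver without loops with a partially
defined injective translation `tau` (defined exactly on the non-projective vertices;
the vertices outside its range are the injective ones) and, for every non-projective
vertex `w` and every vertex `u`, a bijection `sigma` from the arrows `u ⟶ w` to the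
arrows `tau w ⟶ u`. -/
structure TranslationQuiver where
  V : Type
  Arrow : V → V → Type
  fintypeHom : ∀ a b : V, Fintype (Arrow a b)
  fintypeOut : ∀ a : V, Fintype ((b : V) × Arrow a b)
  fintypeIn : ∀ a : V, Fintype ((b : V) × Arrow b a)
  noLoops : ∀ a : V, IsEmpty (Arrow a a)
  /-- `Proj x` means that the vertex `x` is projective. -/
  Proj : V → Prop
  tau : {x : V // ¬ Proj x} → V
  tau_inj : Function.Injective tau
  sigma : ∀ (w : {x : V // ¬ Proj x}) (u : V), Arrow u w.1 ≃ Arrow (tau w) u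

attribute [instance] TranslationQuiver.fintypeHom TranslationQuiver.fintypeOut
  TranslationQuiver.fintypeIn

instance (T : TranslationQuiver) : Quiver T.V := ⟨T.Arrow⟩

namespace TranslationQuiver

/-- A vertex is injective iff it is not in the range of the translation. -/
def Inj (T : TranslationQuiver) (x : T.V) : Prop := x ∉ Set.range T.tau

/-- `z` is a predecessor of `y` (there is a path `z ⇝ y`). -/
def PredOf (T : TranslationQuiver) (y z : T.V) : Prop := Nonempty (Quiver.Path z y)

/-- `u` has at least two immediate successors. -/
def TwoSucc (T : TranslationQuiver) (u : T.V) : Prop :=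
  ∃ v v' : T.V, v ≠ v' ∧ Nonempty (T.Arrow u v) ∧ Nonempty (T.Arrow u v')

/-- The closedness condition for two consecutive arrows `u ⟶ v ⟶ w` of a path:
if `w` is non-projective and `τ w = u` then `u` must have at least two
immediate successors. -/
def ClosedCons (T : TranslationQuiver) {u v w : T.V}
    (_e₁ : T.Arrow u v) (_e₂ : T.Arrow v w) : Prop :=
  ∀ hw : ¬ T.Proj w, T.tau ⟨w, hw⟩ = u → T.TwoSucc u

/-- A path is closed if every pair of consecutive arrows satisfies `ClosedCons`. -/
def Closed (T : TranslationQuiver) : ∀ {x y : T.V}, Quiver.Path x y → Prop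
  | _, _, .nil => True
  | _, _, .cons .nil _ => True
  | _, _, .cons (.cons p e₁) e₂ =>
      Closed T (Quiver.Path.cons p e₁) ∧ T.ClosedCons e₁ e₂

/-- The list of vertices visited by a path (from the end vertex backwards). -/
def vertList (T : TranslationQuiver) : ∀ {x y : T.V}, Quiver.Path x y → List T.V
  | _, y, .nil => [y]
  | _, y, .cons p _ => y :: vertList T p

/-- The length-two path `τ w ⟶ u ⟶ w` through the mesh ending at `w`
determined by an arrow `β : u ⟶ w`. -/
def meshPath (T : TranslationQuiver) {w : T.V} (hw : ¬ T.Proj w)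
    (β : (u : T.V) × T.Arrow u w) : Quiver.Path (T.tau ⟨w, hw⟩) w :=
  (Quiver.Hom.toPath (T.sigma ⟨w, hw⟩ β.1 β.2)).cons β.2

/-- The set of mesh-canonical relations between `x` and `y` in `kΔ(x,y)`
(the vector space with basis the paths from `x` to `y`, modelled as finitely
supported functions on paths): the elements `γ₂ m_z γ₁` with `z = τ w`
non-injective, `γ₁ : x ⇝ z` and `γ₂ : τ⁻¹ z = w ⇝ y`. -/
def MeshCanonical (T : TranslationQuiver) (k : Type) [Field k] (x y : T.V) :
    Set (Quiver.Path x y →₀ k) :=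
  { r | ∃ (w : T.V) (hw : ¬ T.Proj w) (γ₁ : Quiver.Path x (T.tau ⟨w, hw⟩))
      (γ₂ : Quiver.Path w y),
      r = ∑ β : (u : T.V) × T.Arrow u w,
        Finsupp.single ((γ₁.comp (meshPath T hw β)).comp γ₂) (1 : k) }

/-- The mesh-canonical relations between `x` and `y` of length `m`. -/
def MeshCanonicalLen (T : TranslationQuiver) (k : Type) [Field k] (x y : T.V) (m : ℕ) :
    Set (Quiver.Path x y →₀ k) :=
  { r | ∃ (w : T.V) (hw : ¬ T.Proj w) (γ₁ : Quiver.Path x (T.tau ⟨w, hw⟩))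
      (γ₂ : Quiver.Path w y),
      γ₁.length + 2 + γ₂.length = m ∧
      r = ∑ β : (u : T.V) × T.Arrow u w,
        Finsupp.single ((γ₁.comp (meshPath T hw β)).comp γ₂) (1 : k) }

/-- The mesh-canonical relations derived from the mesh of `x = τ w`
(those of the form `γ₂ m_x` with `γ₂ : τ⁻¹ x = w ⇝ y`). -/
def MeshAtSet (T : TranslationQuiver) (k : Type) [Field k] {w : T.V}
    (hw : ¬ T.Proj w) (y : T.V) : Set (Quiver.Path (T.tau ⟨w, hw⟩) y →₀ k) :=
  { r | ∃ γ₂ : Quiver.Path w y,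
      r = ∑ β : (u : T.V) × T.Arrow u w,
        Finsupp.single ((meshPath T hw β).comp γ₂) (1 : k) }

/-- For `x = τ w` non-injective, an arrow `a = (α : x ⟶ v)` starting at `x` and
`s ∈ kΔ(w, y)`, the element `s_α = s (σ⁻¹ α) α` of `kΔ(x, y)`. -/
noncomputable def derComesh (T : TranslationQuiver) (k : Type) [Field k] {w : T.V}
    (hw : ¬ T.Proj w) {y : T.V} (a : (v : T.V) × T.Arrow (T.tau ⟨w, hw⟩) v)
    (s : Quiver.Path w y →₀ k) : Quiver.Path (T.tau ⟨w, hw⟩) y →₀ k :=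
  Finsupp.mapDomain
    (fun p => (((Quiver.Hom.toPath a.2).cons ((T.sigma ⟨w, hw⟩ a.1).symm a.2)).comp p)) s

/-- The arrows starting at `z`. -/
abbrev OutArrow (T : TranslationQuiver) (z : T.V) := (v : T.V) × T.Arrow z v

/-- A family of orders, one for each path `γ : x ⇝ z`, on the arrows starting at
the end vertex `z` of `γ`. -/
abbrev OFam (T : TranslationQuiver) (x : T.V) :=
  ∀ z : T.V, Quiver.Path x z → OutArrow T z → OutArrow T z → Prop

/-- `O` is a family of (strict) total orders on the arrows starting at the
end vertices of paths `x ⇝ z` and ending at predecessors of `y`. -/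
def IsOrderFamily (T : TranslationQuiver) (x y : T.V) (O : OFam T x) : Prop :=
  ∀ (z : T.V) (γ : Quiver.Path x z),
    (∀ a : OutArrow T z, ¬ O z γ a a) ∧
    (∀ a b c : OutArrow T z, O z γ a b → O z γ b c → O z γ a c) ∧
    (∀ a b : OutArrow T z, T.PredOf y a.1 → T.PredOf y b.1 → a ≠ b →
      O z γ a b ∨ O z γ b a)

/-- The lexicographic order on the paths from `x` to `y` induced by the family `O`:
`δ < δ'` iff, `γ` being the longest common initial subpath of `δ` and `δ'` and
`a`, `a'` the arrows with which `δ`, `δ'` respectively continue after `γ`,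
one has `a <_γ a'`. -/
def LexLt (T : TranslationQuiver) {x y : T.V} (O : OFam T x)
    (δ δ' : Quiver.Path x y) : Prop :=
  ∃ (z : T.V) (γ : Quiver.Path x z) (a a' : OutArrow T z)
    (δ₁ : Quiver.Path a.1 y) (δ₁' : Quiver.Path a'.1 y),
    a ≠ a' ∧ δ = (γ.cons a.2).comp δ₁ ∧ δ' = (γ.cons a'.2).comp δ₁' ∧ O z γ a a'

/-- The order family `O` is mesh-lexicographic (for paths from `x` to `y`):
it is a family of total orders and, whenever `γ : x ⇝ z` with `z = τ w`
non-injective, `w = τ⁻¹ z` a predecessor of `y`, and `α : z ⟶ z'` the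
`<_γ`-largest arrow starting at `z` and ending at a predecessor of `y`,
the arrow `σ⁻¹ α : z' ⟶ w` is `≤_{αγ} β` for every arrow `β : z' ⟶ v` with `v`
a predecessor of `y`. -/
def IsMeshLex (T : TranslationQuiver) (x y : T.V) (O : OFam T x) : Prop :=
  IsOrderFamily T x y O ∧
  ∀ (w : T.V) (hw : ¬ T.Proj w) (γ : Quiver.Path x (T.tau ⟨w, hw⟩))
    (z' : T.V) (α : T.Arrow (T.tau ⟨w, hw⟩) z'),
    T.PredOf y w → T.PredOf y z' →
    (∀ b : OutArrow T (T.tau ⟨w, hw⟩), T.PredOf y b.1 →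
      b ≠ ⟨z', α⟩ → O _ γ b ⟨z', α⟩) →
    ∀ (v : T.V) (β : T.Arrow z' v), T.PredOf y v →
      (⟨v, β⟩ : OutArrow T z') ≠ ⟨w, (T.sigma ⟨w, hw⟩ z').symm α⟩ →
      O z' (γ.cons α) ⟨w, (T.sigma ⟨w, hw⟩ z').symm α⟩ ⟨v, β⟩

/-- `p` is the leading basis element (the largest path occurring with nonzero
coefficient) of `f ∈ kΔ(x,y)`, with respect to the lexicographic order induced
by the order family `O`. -/
def IsLpPath (T : TranslationQuiver) {k : Type} [Field k] {x y : T.V} (O : OFam T x)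
    (f : Quiver.Path x y →₀ k) (p : Quiver.Path x y) : Prop :=
  f p ≠ 0 ∧ ∀ q : Quiver.Path x y, f q ≠ 0 → q ≠ p → LexLt T O q p

/-- Walks on a translation quiver: formal compositions of arrows and inverses
of arrows. -/
inductive Walk (T : TranslationQuiver) : T.V → T.V → Type
  | nil (a : T.V) : Walk T a a
  | consFwd {a b c : T.V} : Walk T a b → T.Arrow b c → Walk T a c
  | consBwd {a b c : T.V} : Walk T a b → T.Arrow c b → Walk T a c

/-- Composition of walks. -/
def Walk.comp {T : TranslationQuiver} : ∀ {a b c : T.V}, Walk T a b → Walk T b c → Walk T a c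
  | _, _, _, p, .nil _ => p
  | _, _, _, p, .consFwd q e => .consFwd (p.comp q) e
  | _, _, _, p, .consBwd q e => .consBwd (p.comp q) e

/-- A path is in particular a walk. -/
def pathToWalk (T : TranslationQuiver) : ∀ {a b : T.V}, Quiver.Path a b → Walk T a b
  | a, _, .nil => .nil a
  | _, _, .cons p e => .consFwd (pathToWalk T p) e

/-- Homotopy of walks: the smallest equivalence relation such that
(a) `α α⁻¹ ∼ ε` and `α⁻¹ α ∼ ε`; (b) `α (σ α) ∼ α' (σ α')` for arrows `α, α'`
ending at a non-projective vertex; (c) it is compatible with composition; and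
(d) `α ∼ β` for parallel arrows. -/
inductive Homotopic (T : TranslationQuiver) : ∀ {a b : T.V}, Walk T a b → Walk T a b → Prop
  | refl {a b : T.V} (p : Walk T a b) : Homotopic T p p
  | symm {a b : T.V} {p q : Walk T a b} : Homotopic T p q → Homotopic T q p
  | trans {a b : T.V} {p q r : Walk T a b} :
      Homotopic T p q → Homotopic T q r → Homotopic T p r
  | cancel_left {a b : T.V} (e : T.Arrow a b) :
      Homotopic T (((Walk.nil a).consFwd e).consBwd e) (Walk.nil a)
  | cancel_right {a b : T.V} (e : T.Arrow a b) :
      Homotopic T (((Walk.nil b).consBwd e).consFwd e) (Walk.nil b)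
  | mesh {w : T.V} (hw : ¬ T.Proj w) {u u' : T.V} (β : T.Arrow u w) (β' : T.Arrow u' w) :
      Homotopic T
        (((Walk.nil (T.tau ⟨w, hw⟩)).consFwd (T.sigma ⟨w, hw⟩ u β)).consFwd β)
        (((Walk.nil (T.tau ⟨w, hw⟩)).consFwd (T.sigma ⟨w, hw⟩ u' β')).consFwd β')
  | comp_congr {a b c d : T.V} {p q : Walk T b c} (w₁ : Walk T a b) (w₂ : Walk T c d) :
      Homotopic T p q → Homotopic T ((w₁.comp p).comp w₂) ((w₁.comp q).comp w₂)
  | par {a b : T.V} (e e' : T.Arrow a b) :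
      Homotopic T ((Walk.nil a).consFwd e) ((Walk.nil a).consFwd e')

end TranslationQuiver

namespace TranslationQuiver

/-- The path determined by a choice of one arrow `X i ⟶ X (i+1)` for each `i`. -/
def pathOfChoices (T : TranslationQuiver) :
    ∀ (n : ℕ) (X : Fin (n + 1) → T.V)
      (e : ∀ i : Fin n, T.Arrow (X i.castSucc) (X i.succ)),
      Quiver.Path (X 0) (X (Fin.last n))
  | 0, _, _ => Quiver.Path.nil
  | n + 1, X, e =>
      (pathOfChoices T n (fun i => X i.castSucc) (fun i => e i.castSucc)).cons
        (e (Fin.last n))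

end TranslationQuiver

namespace TranslationQuiver

variable {T : TranslationQuiver} {k : Type} [Field k]

/-! ### Lengths of homotopic paths -/

/-- The signed length of a walk: inverse arrows count `-1`. -/
def Walk.deg : ∀ {a b : T.V}, Walk T a b → ℤ
  | _, _, .nil _ => 0
  | _, _, .consFwd p _ => p.deg + 1
  | _, _, .consBwd p _ => p.deg - 1

lemma Walk.deg_comp {a b c : T.V} (p : Walk T a b) (q : Walk T b c) :
    (p.comp q).deg = p.deg + q.deg := by
  induction q with
  | nil => simp [Walk.comp, Walk.deg]
  | consFwd q e ih => simp [Walk.comp, Walk.deg, ih]; ring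
  | consBwd q e ih => simp [Walk.comp, Walk.deg, ih]; ring

lemma Homotopic.deg_eq {a b : T.V} {p q : Walk T a b} (h : Homotopic T p q) :
    p.deg = q.deg := by
  induction h with
  | refl => rfl
  | symm _ ih => exact ih.symm
  | trans _ _ ih₁ ih₂ => exact ih₁.trans ih₂
  | cancel_left | cancel_right | mesh | par => simp [Walk.deg]
  | comp_congr w₁ w₂ _ ih => simp [Walk.deg_comp, ih]

lemma deg_pathToWalk {a b : T.V} (p : Quiver.Path a b) :
    (pathToWalk T p).deg = p.length := by
  induction p with
  | nil => simp [pathToWalk, Walk.deg]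
  | cons p e ih => simp [pathToWalk, Walk.deg, ih]

lemma Closed.of_cons {x v u : T.V} {p : Quiver.Path x v} {e : T.Arrow v u}
    (h : T.Closed (Quiver.Path.cons p e)) : T.Closed p := by
  cases p with
  | nil => simp [Closed]
  | cons p e' =>
    rw [Closed] at h
    exact h.1

lemma Closed.twoSucc {x v u : T.V} {hu : ¬ T.Proj u} {p : Quiver.Path x (T.tau ⟨u, hu⟩)}
    {e₁ : T.Arrow (T.tau ⟨u, hu⟩) v} {e₂ : T.Arrow v u}
    (h : T.Closed (Quiver.Path.cons (Quiver.Path.cons p e₁) e₂)) :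
    T.TwoSucc (T.tau ⟨u, hu⟩) := by
  rw [Closed] at h
  exact h.2 hu rfl

/-! ### Last arrows -/

/-- `I(x,y)`, the span of the mesh-canonical relations. -/
noncomputable abbrev meshIdeal (T : TranslationQuiver) (k : Type) [Field k] (x y : T.V) :
    Submodule k (Quiver.Path x y →₀ k) :=
  Submodule.span k (MeshCanonical T k x y)

/-- Composition `s ↦ b s` of elements of `kΔ(x,v)` with an arrow `b : v ⟶ u`. -/
noncomputable def post (k : Type) [Field k] (x : T.V) {v u : T.V} (b : T.Arrow v u) :
    (Quiver.Path x v →₀ k) →ₗ[k] (Quiver.Path x u →₀ k) :=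
  Finsupp.lmapDomain k k (fun p => Quiver.Path.cons p b)

lemma cons_injective (x : T.V) {v u : T.V} (b : T.Arrow v u) :
    Function.Injective (fun p : Quiver.Path x v => Quiver.Path.cons p b) := by
  intro p q h
  simpa using h

/-- The part of an element of `kΔ(x,u)` supported on the paths with last arrow `b : v ⟶ u`,
with this last arrow removed. -/
noncomputable def lastCoeff (k : Type) [Field k] (x : T.V) {v u : T.V} (b : T.Arrow v u) :
    (Quiver.Path x u →₀ k) →ₗ[k] (Quiver.Path x v →₀ k) :=
  Finsupp.lcomapDomain _ (cons_injective x b)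

@[simp]
lemma post_single (x : T.V) {v u : T.V} (b : T.Arrow v u) (p : Quiver.Path x v) (c : k) :
    post k x b (Finsupp.single p c) = Finsupp.single (Quiver.Path.cons p b) c := by
  simp [post]

lemma lastCoeff_apply (x : T.V) {v u : T.V} (b : T.Arrow v u) (f : Quiver.Path x u →₀ k)
    (p : Quiver.Path x v) : lastCoeff k x b f p = f (Quiver.Path.cons p b) := rfl

lemma lastCoeff_post_self (x : T.V) {v u : T.V} (b : T.Arrow v u) (s : Quiver.Path x v →₀ k) :
    lastCoeff k x b (post k x b s) = s := by
  ext p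
  exact Finsupp.mapDomain_apply (cons_injective x b) s p

lemma lastCoeff_post_ne (x : T.V) {v v' u : T.V} (b : T.Arrow v u) (b' : T.Arrow v' u)
    (h : (⟨v, b⟩ : (v : T.V) × T.Arrow v u) ≠ ⟨v', b'⟩) (s : Quiver.Path x v' →₀ k) :
    lastCoeff k x b (post k x b' s) = 0 := by
  ext p
  rw [lastCoeff_apply]
  refine Finsupp.mapDomain_of_notMem_range s _ ?_
  rintro ⟨q, hq⟩
  simp only [Quiver.Path.cons.injEq] at hq
  obtain ⟨rfl, -, hb⟩ := hq
  exact h (by rw [eq_of_heq hb])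

/-! ### Last coefficients of elements of the mesh ideal -/

/-- The mesh-canonical relation `γ₂ m γ₁`, for `m` the mesh ending at `w`. -/
noncomputable def meshRel (k : Type) [Field k] {x y w : T.V} (hw : ¬ T.Proj w)
    (γ₁ : Quiver.Path x (T.tau ⟨w, hw⟩)) (γ₂ : Quiver.Path w y) : Quiver.Path x y →₀ k :=
  ∑ β : (u : T.V) × T.Arrow u w,
    Finsupp.single ((γ₁.comp (meshPath T hw β)).comp γ₂) (1 : k)

lemma meshRel_nil {x w : T.V} (hw : ¬ T.Proj w) (γ₁ : Quiver.Path x (T.tau ⟨w, hw⟩)) :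
    meshRel k hw γ₁ Quiver.Path.nil = ∑ β : (u : T.V) × T.Arrow u w,
      post k x β.2 (post k x (T.sigma ⟨w, hw⟩ β.1 β.2) (Finsupp.single γ₁ 1)) := by
  refine Finset.sum_congr rfl fun β _ => ?_
  rw [post_single, post_single]
  rfl

lemma meshRel_cons {x w v u : T.V} (hw : ¬ T.Proj w) (γ₁ : Quiver.Path x (T.tau ⟨w, hw⟩))
    (γ₂ : Quiver.Path w v) (e : T.Arrow v u) :
    meshRel k hw γ₁ (Quiver.Path.cons γ₂ e) = post k x e (meshRel k hw γ₁ γ₂) := by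
  rw [meshRel, meshRel, map_sum]
  refine Finset.sum_congr rfl fun β _ => ?_
  rw [post_single]
  rfl

lemma meshRel_mem {x y w : T.V} (hw : ¬ T.Proj w)
    (γ₁ : Quiver.Path x (T.tau ⟨w, hw⟩)) (γ₂ : Quiver.Path w y) :
    meshRel k hw γ₁ γ₂ ∈ meshIdeal T k x y :=
  Submodule.subset_span ⟨w, hw, γ₁, γ₂, rfl⟩

lemma lastCoeff_meshRel_nil {x w v : T.V} (hw : ¬ T.Proj w)
    (γ₁ : Quiver.Path x (T.tau ⟨w, hw⟩)) (b : T.Arrow v w) :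
    lastCoeff k x b (meshRel k hw γ₁ Quiver.Path.nil) =
      post k x (T.sigma ⟨w, hw⟩ v b) (Finsupp.single γ₁ 1) := by
  classical
  rw [meshRel_nil, map_sum, Finset.sum_eq_single ⟨v, b⟩]
  · exact lastCoeff_post_self x b _
  · intro β _ hβ
    exact lastCoeff_post_ne x b β.2 (fun h => hβ h.symm) _
  · simp

lemma lastCoeff_meshRel_cons_mem {x w v v' u : T.V} (hw : ¬ T.Proj w)
    (γ₁ : Quiver.Path x (T.tau ⟨w, hw⟩)) (γ₂ : Quiver.Path w v) (e : T.Arrow v u)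
    (b : T.Arrow v' u) :
    lastCoeff k x b (meshRel k hw γ₁ (Quiver.Path.cons γ₂ e)) ∈ meshIdeal T k x v' := by
  rw [meshRel_cons]
  by_cases h : (⟨v', b⟩ : (v : T.V) × T.Arrow v u) = ⟨v, e⟩
  · cases h
    rw [lastCoeff_post_self]
    exact meshRel_mem hw γ₁ γ₂
  · rw [lastCoeff_post_ne x b e h]
    exact zero_mem _

lemma lastCoeff_of_proj {x u : T.V} (hu : T.Proj u) {f : Quiver.Path x u →₀ k}
    (hf : f ∈ meshIdeal T k x u) {v : T.V} (b : T.Arrow v u) :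
    lastCoeff k x b f ∈ meshIdeal T k x v := by
  refine (Submodule.span_le (p := (meshIdeal T k x v).comap (lastCoeff k x b))).2 ?_ hf
  rintro r ⟨w, hw, γ₁, γ₂, rfl⟩
  cases γ₂ with
  | nil => exact absurd hu hw
  | cons γ₂ e => exact lastCoeff_meshRel_cons_mem hw γ₁ γ₂ e b

lemma lastCoeff_of_not_proj {x u : T.V} (hu : ¬ T.Proj u) {f : Quiver.Path x u →₀ k}
    (hf : f ∈ meshIdeal T k x u) :
    ∃ t : Quiver.Path x (T.tau ⟨u, hu⟩) →₀ k, ∀ (v : T.V) (b : T.Arrow v u),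
      lastCoeff k x b f - post k x (T.sigma ⟨u, hu⟩ v b) t ∈ meshIdeal T k x v := by
  induction hf using Submodule.span_induction with
  | mem r hr =>
    obtain ⟨w, hw, γ₁, γ₂, rfl⟩ := hr
    cases γ₂ with
    | nil =>
      refine ⟨Finsupp.single γ₁ 1, fun v b => ?_⟩
      have h := sub_eq_zero.2 (lastCoeff_meshRel_nil (k := k) hw γ₁ b)
      rw [meshRel] at h
      rw [h]
      exact zero_mem _
    | cons γ₂ e =>
      refine ⟨0, fun v b => ?_⟩
      rw [map_zero, sub_zero]
      exact lastCoeff_meshRel_cons_mem hw γ₁ γ₂ e b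
  | zero => exact ⟨0, fun v b => by simp⟩
  | add f g _ _ ihf ihg =>
    obtain ⟨t, ht⟩ := ihf
    obtain ⟨t', ht'⟩ := ihg
    refine ⟨t + t', fun v b => ?_⟩
    rw [map_add, map_add, add_sub_add_comm]
    exact add_mem (ht v b) (ht' v b)
  | smul c f _ ih =>
    obtain ⟨t, ht⟩ := ih
    refine ⟨c • t, fun v b => ?_⟩
    rw [map_smul, map_smul, ← smul_sub]
    exact Submodule.smul_mem _ c (ht v b)

/-! ### Injectivity of composition in the mesh category -/

lemma lastCoeff_sum_post {x v u : T.V} (a : T.Arrow v u → k) (s : Quiver.Path x v →₀ k)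
    (α : T.Arrow v u) :
    lastCoeff k x α (∑ b, a b • post k x b s) = a α • s := by
  classical
  rw [map_sum, Finset.sum_eq_single α]
  · rw [map_smul, lastCoeff_post_self]
  · intro b _ hb
    rw [map_smul, lastCoeff_post_ne, smul_zero]
    intro h
    cases h
    exact hb rfl
  · simp

lemma lastCoeff_sum_post_of_ne {x v v' u : T.V} (a : T.Arrow v u → k)
    (s : Quiver.Path x v →₀ k) (hv : v' ≠ v) (b : T.Arrow v' u) :
    lastCoeff k x b (∑ b, a b • post k x b s) = 0 := by
  rw [map_sum]
  refine Finset.sum_eq_zero fun c _ => ?_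
  rw [map_smul, lastCoeff_post_ne, smul_zero]
  exact fun h => hv (congrArg Sigma.fst h)

/-- If the paths from `x` to `u` are closed and of bounded length, composition with a nonzero
linear combination of the arrows `v ⟶ u` induces an injective map `k(Δ)(x,v) → k(Δ)(x,u)`. -/
lemma mem_of_sum_post_mem {x : T.V} (N : ℕ) :
    ∀ {v u : T.V}, (∀ p : Quiver.Path x u, p.length ≤ N) →
      (∀ p : Quiver.Path x u, T.Closed p) → ∀ (a : T.Arrow v u → k), (∃ α, a α ≠ 0) →
      ∀ s : Quiver.Path x v →₀ k, ∑ b, a b • post k x b s ∈ meshIdeal T k x u →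
      s ∈ meshIdeal T k x v := by
  classical
  induction N with
  | zero =>
    rintro v u hN - a ⟨α, -⟩ s -
    have hs : s = 0 := by
      ext p
      have := hN (Quiver.Path.cons p α)
      simp at this
    rw [hs]
    exact zero_mem _
  | succ N ih =>
    rintro v u hN hcl a ⟨α, hα⟩ s hs
    have key : lastCoeff k x α (∑ b, a b • post k x b s) ∈ meshIdeal T k x v := by
      by_cases hu : T.Proj u
      · exact lastCoeff_of_proj hu hs α
      · obtain ⟨t, ht⟩ := lastCoeff_of_not_proj hu hs
        have htI : t ∈ meshIdeal T k x (T.tau ⟨u, hu⟩) := by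
          by_cases ht0 : t = 0
          · rw [ht0]
            exact zero_mem _
          obtain ⟨p, -⟩ := Finsupp.ne_iff.1 ht0
          -- Closedness at the mesh `τu → v → u` gives a middle vertex different from `v`.
          have h2 : T.TwoSucc (T.tau ⟨u, hu⟩) :=
            (hcl (Quiver.Path.cons (Quiver.Path.cons p (T.sigma ⟨u, hu⟩ v α)) α)).twoSucc
          obtain ⟨v', hv', ⟨c⟩⟩ : ∃ v', v' ≠ v ∧ Nonempty (T.Arrow (T.tau ⟨u, hu⟩) v') := by
            obtain ⟨v₁, v₂, hne, h₁, h₂⟩ := h2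
            by_cases h : v₁ = v
            · exact ⟨v₂, fun h' => hne (h.trans h'.symm), h₂⟩
            · exact ⟨v₁, h, h₁⟩
          obtain ⟨b, rfl⟩ := (T.sigma ⟨u, hu⟩ v').surjective c
          have hb := ht v' b
          rw [lastCoeff_sum_post_of_ne a s hv', zero_sub, neg_mem_iff] at hb
          refine ih (v := T.tau ⟨u, hu⟩) (u := v') (fun p => ?_)
            (fun p => (hcl (Quiver.Path.cons p b)).of_cons)
            (Pi.single (T.sigma ⟨u, hu⟩ v' b) 1) ⟨T.sigma ⟨u, hu⟩ v' b, by simp⟩ t ?_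
          · have := hN (Quiver.Path.cons p b)
            simpa using this
          · rw [Finset.sum_eq_single (T.sigma ⟨u, hu⟩ v' b)]
            · simpa using hb
            · intro c _ hc
              simp [Pi.single_eq_of_ne hc]
            · simp
        have hpost : post k x (T.sigma ⟨u, hu⟩ v α) t ∈ meshIdeal T k x v := by
          refine (Submodule.span_le (p := (meshIdeal T k x v).comap
            (post k x (T.sigma ⟨u, hu⟩ v α)))).2 ?_ htI
          rintro r ⟨w, hw, γ₁, γ₂, rfl⟩
          have := meshRel_mem (k := k) hw γ₁ (Quiver.Path.cons γ₂ (T.sigma ⟨u, hu⟩ v α))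
          rwa [meshRel_cons] at this
        simpa using add_mem (ht v α) hpost
    rw [lastCoeff_sum_post] at key
    exact (Submodule.smul_mem_iff _ hα).1 key

/-! ### Stripping off the arrows of the composite -/

/-- The composite `h_n ⋯ h_1` of `h_i = Σ_α a_i(α) α`. -/
noncomputable def composite {n : ℕ} (X : Fin (n + 1) → T.V)
    (a : ∀ i : Fin n, T.Arrow (X i.castSucc) (X i.succ) → k) :
    Quiver.Path (X 0) (X (Fin.last n)) →₀ k :=
  ∑ e : ∀ i : Fin n, T.Arrow (X i.castSucc) (X i.succ),
    Finsupp.single (pathOfChoices T n X e) (∏ i, a i (e i))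

lemma smul_post_sum {ι : Type} [Fintype ι] {x v u : T.V} (b : T.Arrow v u) (c : k)
    (p : ι → Quiver.Path x v) (d : ι → k) :
    c • post k x b (∑ e, Finsupp.single (p e) (d e)) =
      ∑ e, Finsupp.single (Quiver.Path.cons (p e) b) (c * d e) := by
  simp [map_sum, Finset.smul_sum]

lemma composite_succ {n : ℕ} (X : Fin (n + 1 + 1) → T.V)
    (a : ∀ i : Fin (n + 1), T.Arrow (X i.castSucc) (X i.succ) → k) :
    composite X a = ∑ b, a (Fin.last n) b • post k (X 0) b
      (composite (fun i => X i.castSucc) (fun i => a i.castSucc)) := by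
  classical
  rw [composite, ← (Fin.snocEquiv
    (fun i : Fin (n + 1) => T.Arrow (X i.castSucc) (X i.succ))).sum_comp, Fintype.sum_prod_type]
  refine Finset.sum_congr rfl fun b _ => ?_
  refine Eq.trans ?_ (smul_post_sum b (a (Fin.last n) b)
    (fun e => pathOfChoices T n (fun i => X i.castSucc) e)
    (fun e => ∏ i : Fin n, a i.castSucc (e i))).symm
  refine Finset.sum_congr rfl fun e _ => ?_
  have h₁ : pathOfChoices T (n + 1) X (Fin.snocEquiv
      (fun i : Fin (n + 1) => T.Arrow (X i.castSucc) (X i.succ)) (b, e)) =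
      Quiver.Path.cons (pathOfChoices T n (fun i => X i.castSucc) e) b := by
    simp [pathOfChoices, Fin.snocEquiv]
  have h₂ : ∏ i, a i (Fin.snocEquiv
      (fun i : Fin (n + 1) => T.Arrow (X i.castSucc) (X i.succ)) (b, e) i) =
      a (Fin.last n) b * ∏ i : Fin n, a i.castSucc (e i) := by
    rw [Fin.prod_univ_castSucc, mul_comm]
    simp [Fin.snocEquiv]
  rw [h₁, h₂]
  rfl

lemma nil_apply_eq_zero {x : T.V} {f : Quiver.Path x x →₀ k} (hf : f ∈ meshIdeal T k x x) :
    f Quiver.Path.nil = 0 := by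
  classical
  refine (Submodule.span_le (p := LinearMap.ker (Finsupp.lapply (R := k) (M := k)
    (Quiver.Path.nil : Quiver.Path x x)))).2 ?_ hf
  rintro r ⟨w, hw, γ₁, γ₂, rfl⟩
  simp only [SetLike.mem_coe, LinearMap.mem_ker, Finsupp.lapply_apply, Finsupp.finsetSum_apply]
  refine Finset.sum_eq_zero fun β _ => Finsupp.single_eq_of_ne ?_
  intro h
  have := congrArg Quiver.Path.length h
  simp [meshPath, Quiver.Path.length_comp] at this
  omega

lemma composite_notMem {N : ℕ} : ∀ {n : ℕ} (X : Fin (n + 1) → T.V)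
    (_ : ∀ p : Quiver.Path (X 0) (X (Fin.last n)), p.length ≤ N)
    (_ : ∀ p : Quiver.Path (X 0) (X (Fin.last n)), T.Closed p)
    (a : ∀ i : Fin n, T.Arrow (X i.castSucc) (X i.succ) → k) (_ : ∀ i, ∃ α, a i α ≠ 0),
    composite X a ∉ meshIdeal T k (X 0) (X (Fin.last n)) := by
  intro n
  induction n with
  | zero =>
    intro X _ _ a _ h
    have h0 := nil_apply_eq_zero (x := X 0) h
    have h1 : composite X a = Finsupp.single (Quiver.Path.nil : Quiver.Path (X 0) (X 0)) 1 := by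
      simp [composite, pathOfChoices]
    rw [h1] at h0
    simp at h0
  | succ n ih =>
    intro X hN hcl a ha h
    rw [composite_succ] at h
    have h' := mem_of_sum_post_mem N hN hcl (a (Fin.last n)) (ha _) _ h
    obtain ⟨α, -⟩ := ha (Fin.last n)
    refine ih (fun i => X i.castSucc) (fun p => ?_)
      (fun p => (hcl (Quiver.Path.cons p α)).of_cons) (fun i => a i.castSucc)
      (fun i => ha i.castSucc) h'
    exact (Nat.le_succ _).trans (hN (Quiver.Path.cons p α))

end TranslationQuiver

open TranslationQuiver in
/-- Theorem (zero paths in the mesh category).  Let `x = X 0 → X 1 → ⋯ → X n = y`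
be a path, with all paths from `x` to `y` pairwise homotopic and closed, and for
each `i` let `h_i = Σ_j a_{ij} α_{ij}` be a nonzero linear combination of all the
arrows `X (i-1) ⟶ X i`.  Then the composite `h_n ⋯ h_1 ∈ kΔ(x,y)` (written as the
sum, over all choices of one arrow in each step, of the corresponding path with
the product of the chosen coefficients) does not lie in the subspace `I(x,y)`
spanned by the mesh-canonical relations, i.e. its class in the mesh category
`k(Δ)(x,y)` is nonzero. -/
theorem composite_not_in_mesh_ideal (T : TranslationQuiver) (k : Type) [Field k]
    (n : ℕ) (hn : 1 ≤ n) (X : Fin (n + 1) → T.V)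
    (hhom : ∀ p q : Quiver.Path (X 0) (X (Fin.last n)),
      Homotopic T (pathToWalk T p) (pathToWalk T q))
    (hclosed : ∀ p : Quiver.Path (X 0) (X (Fin.last n)), T.Closed p)
    (a : ∀ i : Fin n, T.Arrow (X i.castSucc) (X i.succ) → k)
    (ha : ∀ i : Fin n, ∃ α, a i α ≠ 0) :
    (∑ e : ∀ i : Fin n, T.Arrow (X i.castSucc) (X i.succ),
        Finsupp.single (pathOfChoices T n X e) (∏ i, a i (e i)))
      ∉ Submodule.span k (MeshCanonical T k (X 0) (X (Fin.last n))) := by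
  choose e he using ha
  have hlen : ∀ p : Quiver.Path (X 0) (X (Fin.last n)),
      p.length ≤ (pathOfChoices T n X e).length := by
    intro p
    have h := (hhom p (pathOfChoices T n X e)).deg_eq
    rw [deg_pathToWalk, deg_pathToWalk] at h
    exact_mod_cast h.le
  exact composite_notMem X hlen hclosed a fun i => ⟨e i, he i⟩
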